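/- (Plotkin bound for EAQEC codes.) Let n, k, c, d be integers with n ≥ 1, k ≥ 1, c ≥ 0 and k + c ≤ n. Suppose S ⊆ V_n is an F₂-subspace with dim S = n−k+c and dim(S ∩ S^⊥) = n−k−c, and suppose every element of S^⊥ \ (S ∩ S^⊥) has Pauli weight at least d. Then, with M = 2^{2k}, we have 4·(M−1)·d ≤ 3·n·M. -/

import Mathlib

open Finset

/-- The binary symplectic space modelling `n`-qubit Pauli operators modulo phases. -/
abbrev V (n : ℕ) := (Fin n → ZMod 2) × (Fin n → ZMod 2)

/-- The Pauli weight of `v = (x, z)`: the number of indices where `(x i, z i) ≠ (0,0)`. -/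
def wt {n : ℕ} (v : V n) : ℕ :=
  (Finset.univ.filter fun i => ¬(v.1 i = 0 ∧ v.2 i = 0)).card

/-- The binary symplectic product. -/
def sympl {n : ℕ} (u v : V n) : ZMod 2 :=
  ∑ i, (u.1 i * v.2 i + u.2 i * v.1 i)

lemma sympl_add_left {n : ℕ} (a b w : V n) :
    sympl (a + b) w = sympl a w + sympl b w := by
  simp only [sympl, Prod.fst_add, Prod.snd_add, Pi.add_apply, ← Finset.sum_add_distrib]
  exact Finset.sum_congr rfl fun i _ => by ring

lemma sympl_smul_left {n : ℕ} (c : ZMod 2) (a w : V n) :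
    sympl (c • a) w = c * sympl a w := by
  simp only [sympl, Prod.smul_fst, Prod.smul_snd, Pi.smul_apply, smul_eq_mul,
    Finset.mul_sum]
  exact Finset.sum_congr rfl fun i _ => by ring

/-- The symplectic dual `W^⊥` of a subspace `W ⊆ V n`. -/
def sdual {n : ℕ} (W : Submodule (ZMod 2) (V n)) : Submodule (ZMod 2) (V n) where
  carrier := {u | ∀ w ∈ W, sympl u w = 0}
  add_mem' := fun ha hb w hw => by
    rw [sympl_add_left, ha w hw, hb w hw, add_zero]
  zero_mem' := fun w hw => by simp [sympl]
  smul_mem' := fun c a ha w hw => by rw [sympl_smul_left, ha w hw, mul_zero]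

open scoped Classical

/-!
In a subgroup of words over an alphabet group of order at most `q`, at least a fraction `1 / q` of
the words vanish at any given site, because vanishing there is the kernel of a homomorphism to the
alphabet. So the average weight is at most `(1 - 1 / q) * n`. A subgroup of index `M` leaves a
fraction `1 - 1 / M` of the words outside, and if these all have weight at least `d`, then
`(1 - 1 / M) * d ≤ (1 - 1 / q) * n`.

For an EAQEC code the words are the elements of `S^⊥`, viewed over the alphabet of the four
single-qubit Paulis, and the subgroup is the radical of `S`. Its index is `2 ^ (2 * k)`, since
`dim S + dim S^⊥ = 2 * n` by nondegeneracy of the symplectic form.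
-/

section Averaging

variable {G A : Type*} [AddGroup G] [AddGroup A] {q : ℕ}

lemma natCard_le_mul_natCard_ker [Finite A] (hA : Nat.card A ≤ q) (f : G →+ A) :
    Nat.card G ≤ q * Nat.card f.ker :=
  calc Nat.card G = Nat.card f.range * Nat.card f.ker := by
        rw [← AddSubgroup.index_ker, AddSubgroup.index_mul_card]
    _ ≤ q * Nat.card f.ker :=
        Nat.mul_le_mul_right _ ((AddSubgroup.card_le_card_addGroup _).trans hA)

lemma mul_card_filter_ne_zero_le [Fintype G] [Finite A] [DecidableEq A] (hA : Nat.card A ≤ q)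
    (f : G →+ A) : q * #{g | f g ≠ 0} ≤ (q - 1) * Nat.card G := by
  have hker : #{g | f g = 0} = Nat.card f.ker := by
    rw [← Fintype.card_subtype, ← Nat.card_eq_fintype_card]
    rfl
  have hsplit : #{g | f g = 0} + #{g | f g ≠ 0} = Nat.card G := by
    rw [card_filter_add_card_filter_not, card_univ, Nat.card_eq_fintype_card]
  calc q * #{g | f g ≠ 0} = q * Nat.card G - q * Nat.card f.ker := by
        rw [← Nat.mul_sub, ← hsplit, ← hker, Nat.add_sub_cancel_left]
    _ ≤ q * Nat.card G - Nat.card G := Nat.sub_le_sub_left (natCard_le_mul_natCard_ker hA f) _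
    _ = (q - 1) * Nat.card G := (Nat.sub_one_mul ..).symm

lemma index_sub_one_mul_natCard_mul_le_sum [Fintype G] (R : AddSubgroup G) {w : G → ℕ} {d : ℕ}
    (hw : ∀ g ∉ R, d ≤ w g) : (R.index - 1) * Nat.card R * d ≤ ∑ g, w g := by
  have hin : #{g | g ∈ R} = Nat.card R := by
    rw [← Fintype.card_subtype, ← Nat.card_eq_fintype_card]
  have hsplit : #{g | g ∈ R} + #{g | g ∉ R} = Nat.card G := by
    rw [card_filter_add_card_filter_not, card_univ, Nat.card_eq_fintype_card]
  have hout : (R.index - 1) * Nat.card R = #{g | g ∉ R} := by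
    rw [Nat.sub_one_mul, R.index_mul_card, ← hsplit, ← hin, Nat.add_sub_cancel_left]
  calc (R.index - 1) * Nat.card R * d = #{g | g ∉ R} • d := by rw [hout, smul_eq_mul]
    _ ≤ ∑ g with g ∉ R, w g := card_nsmul_le_sum _ _ _ fun g hg => hw g (mem_filter.1 hg).2
    _ ≤ ∑ g, w g := sum_le_sum_of_subset (filter_subset _ _)

variable {ι : Type*} [Fintype ι] {β : ι → Type*} [∀ i, AddGroup (β i)] [∀ i, Finite (β i)]
  [∀ i, DecidableEq (β i)]

lemma mul_sum_hammingNorm_le [Fintype G] (hβ : ∀ i, Nat.card (β i) ≤ q) (f : G →+ ∀ i, β i) :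
    q * ∑ g, hammingNorm (f g) ≤ (q - 1) * Fintype.card ι * Nat.card G :=
  calc q * ∑ g, hammingNorm (f g) = ∑ i, q * #{g | f g i ≠ 0} := by
        simp only [hammingNorm, card_filter]
        rw [sum_comm, mul_sum]
    _ ≤ ∑ _i : ι, (q - 1) * Nat.card G :=
        sum_le_sum fun i _ => mul_card_filter_ne_zero_le (hβ i) ((Pi.evalAddMonoidHom β i).comp f)
    _ = (q - 1) * Fintype.card ι * Nat.card G := by
        rw [sum_const, card_univ, smul_eq_mul]
        ring

theorem plotkin_bound_index [Finite G] (hβ : ∀ i, Nat.card (β i) ≤ q) (f : G →+ ∀ i, β i)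
    (R : AddSubgroup G) {d : ℕ} (hd : ∀ g ∉ R, d ≤ hammingNorm (f g)) :
    q * (R.index - 1) * d ≤ (q - 1) * Fintype.card ι * R.index := by
  have := Fintype.ofFinite G
  refine Nat.le_of_mul_le_mul_right ?_ (Nat.card_pos (α := R))
  calc q * (R.index - 1) * d * Nat.card R = q * ((R.index - 1) * Nat.card R * d) := by ring
    _ ≤ q * ∑ g, hammingNorm (f g) :=
        Nat.mul_le_mul_left _ (index_sub_one_mul_natCard_mul_le_sum R hd)
    _ ≤ (q - 1) * Fintype.card ι * Nat.card G := mul_sum_hammingNorm_le hβ f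
    _ = (q - 1) * Fintype.card ι * R.index * Nat.card R := by
        rw [← R.index_mul_card, mul_assoc _ R.index]

end Averaging

section Index

variable {K E : Type*} [DivisionRing K] [AddCommGroup E] [Module K E] [FiniteDimensional K E]

lemma index_toAddSubgroup_eq_pow_finrank (W : Submodule K E) :
    W.toAddSubgroup.index = Nat.card K ^ Module.finrank K (E ⧸ W) :=
  Module.natCard_eq_pow_finrank (V := E ⧸ W)

lemma finrank_quotient_submoduleOf_add (U W : Submodule K E) :
    Module.finrank K (W ⧸ U.submoduleOf W) + Module.finrank K (U ⊓ W : Submodule K E) =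
      Module.finrank K W := by
  rw [← (U.submoduleOf W).finrank_quotient_add_finrank, ← Submodule.finrank_map_subtype_eq,
    Submodule.submoduleOf, Submodule.map_comap_subtype, inf_comm]

end Index

section Symplectic

variable {n : ℕ}

lemma sympl_comm (u v : V n) : sympl u v = sympl v u :=
  sum_congr rfl fun _ _ => by ring

/-- The symplectic product `sympl` as a bilinear form, which gives access to Mathlib's dimension
formula for orthogonal complements. -/
def symplForm (n : ℕ) : LinearMap.BilinForm (ZMod 2) (V n) :=
  LinearMap.mk₂ (ZMod 2) sympl sympl_add_left sympl_smul_left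
    (fun u v w => by simp only [sympl_comm u, sympl_add_left])
    (fun a u v => by simp only [sympl_comm u, sympl_smul_left, smul_eq_mul])

lemma symplForm_nondegenerate : (symplForm n).Nondegenerate := by
  have hrefl : (symplForm n).IsRefl := fun u v h => (sympl_comm v u).trans h
  refine hrefl.nondegenerate_iff_separatingLeft.2 fun u hu => ?_
  ext i
  · simpa [symplForm, sympl, Pi.single_apply] using hu (0, Pi.single i 1)
  · simpa [symplForm, sympl, Pi.single_apply] using hu (Pi.single i 1, 0)

lemma sdual_eq_orthogonal (W : Submodule (ZMod 2) (V n)) :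
    sdual W = (symplForm n).orthogonal W := by
  ext u
  exact forall₂_congr fun w _ => by rw [sympl_comm]; rfl

lemma finrank_sdual_add_finrank (W : Submodule (ZMod 2) (V n)) :
    Module.finrank (ZMod 2) (sdual W) + Module.finrank (ZMod 2) W = 2 * n := by
  have hV : Module.finrank (ZMod 2) (V n) = 2 * n := by
    rw [Module.finrank_prod, Module.finrank_fin_fun, two_mul]
  rw [sdual_eq_orthogonal, LinearMap.BilinForm.finrank_orthogonal symplForm_nondegenerate,
    Nat.sub_add_cancel W.finrank_le, hV]

/-- A Pauli operator as a word over the alphabet of single-qubit Paulis, so that Pauli weight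
becomes Hamming weight. -/
def pauliWord (n : ℕ) : V n →+ (Fin n → ZMod 2 × ZMod 2) where
  toFun v i := (v.1 i, v.2 i)
  map_zero' := rfl
  map_add' _ _ := rfl

lemma hammingNorm_pauliWord (v : V n) : hammingNorm (pauliWord n v) = wt v := by
  simp only [hammingNorm, wt, pauliWord, AddMonoidHom.coe_mk, ZeroHom.coe_mk, ne_eq,
    Prod.mk_eq_zero]

end Symplectic

/-- Plotkin bound for EAQEC codes: for an `[[n,k,d;c]]` EAQEC code,
with `M = 2^{2k}`, we have `4(M−1)d ≤ 3nM`. -/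
theorem EAQEC_plotkin_bound (n k c d : ℕ) (hn : 1 ≤ n) (hk : 1 ≤ k)
    (hkc : k + c ≤ n)
    (S : Submodule (ZMod 2) (V n))
    (hdim : Module.finrank (ZMod 2) S + k = n + c)
    (hrad : Module.finrank (ZMod 2) (S ⊓ sdual S : Submodule (ZMod 2) (V n)) + k + c = n)
    (hdist : ∀ v ∈ sdual S, v ∉ (S ⊓ sdual S : Submodule (ZMod 2) (V n)) → d ≤ wt v) :
    4 * (2 ^ (2 * k) - 1) * d ≤ 3 * n * 2 ^ (2 * k) := by
  have hquot : Module.finrank (ZMod 2) (sdual S ⧸ S.submoduleOf (sdual S)) = 2 * k := by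
    have := finrank_quotient_submoduleOf_add S (sdual S)
    have := finrank_sdual_add_finrank S
    lia
  have hindex : (S.submoduleOf (sdual S)).toAddSubgroup.index = 2 ^ (2 * k) := by
    rw [index_toAddSubgroup_eq_pow_finrank, Nat.card_zmod, hquot]
  have hweight : ∀ v : sdual S, v ∉ (S.submoduleOf (sdual S)).toAddSubgroup →
      d ≤ hammingNorm (pauliWord n v) := fun v hv => by
    rw [hammingNorm_pauliWord]
    exact hdist v v.2 fun h => hv h.1
  have halphabet : Nat.card (ZMod 2 × ZMod 2) = 4 := by
    rw [Nat.card_prod, Nat.card_zmod]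
  simpa only [hindex, Fintype.card_fin] using
    plotkin_bound_index (fun _ => halphabet.le) ((pauliWord n).comp (sdual S).toAddSubgroup.subtype)
      (S.submoduleOf (sdual S)).toAddSubgroup hweight
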